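/- Let α > -1 and 0 < p < ∞ with p < α + 2. Then the norm of the point evaluation functional δ_z on the weighted Dirichlet space D^p_α satisfies ‖δ_z‖ ≍ 1/(1-|z|²)^{(α+2-p)/p}, i.e., there exist constants c, C > 0 independent of z ∈ 𝔻 such that c/(1-|z|²)^{(α+2-p)/p} ≤ sup{|f(z)| : f ∈ D^p_α, ‖f‖_{D^p_α} ≤ 1} ≤ C/(1-|z|²)^{(α+2-p)/p} for all z ∈ 𝔻. -/

import Mathlib

open MeasureTheory Metric Set Filter Topology ENNReal

noncomputable section

/-- The open unit disk in ℂ. -/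
def unitDisk : Set ℂ := Metric.ball (0 : ℂ) 1

/-- The normalized Lebesgue area measure `dA = (1/π) dx dy` on ℂ. -/
def areaMeasure : Measure ℂ := (ENNReal.ofReal (Real.pi)⁻¹) • (volume : Measure ℂ)

/-- `∫_𝔻 |f'(z)|^p (1-|z|²)^α dA(z)`, as an extended nonnegative real. -/
def dirichletLintegral (p α : ℝ) (f : ℂ → ℂ) : ℝ≥0∞ :=
  ∫⁻ z in unitDisk, ENNReal.ofReal (‖deriv f z‖ ^ p * (1 - ‖z‖ ^ 2) ^ α) ∂areaMeasure

/-- Membership in the weighted Dirichlet space `D^p_α`: analytic on 𝔻 with finite norm. -/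
def MemDirichlet (p α : ℝ) (f : ℂ → ℂ) : Prop :=
  DifferentiableOn ℂ f unitDisk ∧ dirichletLintegral p α f < ⊤

/-- The norm of the weighted Dirichlet space `D^p_α`:
`(|f(0)|^p + ∫_𝔻 |f'(z)|^p (1-|z|²)^α dA(z))^{1/p}`. -/
def dirichletNorm (p α : ℝ) (f : ℂ → ℂ) : ℝ :=
  (‖f 0‖ ^ p + (dirichletLintegral p α f).toReal) ^ (1 / p)

/-! For holomorphic `g` on a ball `B = B(c, R)` of real dimension `n` and any `p > 0`, `|g(c)|^p`
is at most a constant times the mean of `|g|^p` over `B`. Indeed, let `w` maximise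
`|g(w)| (R - |w - c|)^(n / p)`. On the ball around `w` of radius `(R - |w - c|) / 2`, `|g|` is
bounded by a multiple of `|g(w)|`; by the Schwarz lemma `|g| ≥ |g(w)| / 2` on a smaller ball of
comparable radius, and this ball alone contributes enough to the integral.

Applied to `f'` on the disks `B(w, (1 - |w|) / 2)`, this gives
`|f'(w)| ≲ ‖f‖ (1 - |w|)^(-(α + 2) / p)`. As `(α + 2) / p > 1`, integrating along the radius from
`0` to `z` yields the upper bound.

For the lower bound put `β = (α + 2) / p` and `f_a(w) = (1 - |a|²)^β (1 - ā w)^(1 - 2β)`. Then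
`|f_a'| ≲ |φ_a'|^β` for the disk automorphism `φ_a`. Since `|φ_a'(w)| (1 - |w|²) = 1 - |φ_a(w)|²`,
it follows that `|f_a'(w)|^p (1 - |w|²)^α ≲ |φ_a'(w)|² (1 - |φ_a(w)|²)^α`, and the integral of the
right-hand side is independent of `a` by the change of variables `z = φ_a(w)`. Hence the `f_a` are
bounded in `D^p_α`, while `|f_a(a)| = (1 - |a|²)^(1 - β)`.
-/

section SubMeanValue

lemma exists_ball_norm_le_two_rpow_mul {X F : Type*} [PseudoMetricSpace X] [ProperSpace X]
    [SeminormedAddCommGroup F] {g : X → F} {c : X} {R s : ℝ} (hR : 0 ≤ R) (hs : 0 ≤ s)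
    (hg : ContinuousOn g (closedBall c R)) :
    ∃ w d, 0 ≤ d ∧ ball w d ⊆ ball c R ∧ ‖g c‖ * R ^ s ≤ ‖g w‖ * d ^ s ∧
      ∀ v ∈ ball w (d / 2), ‖g v‖ ≤ 2 ^ s * ‖g w‖ := by
  obtain ⟨w, hw, hmax⟩ : ∃ w ∈ closedBall c R, ∀ v ∈ closedBall c R,
      ‖g v‖ * (R - dist v c) ^ s ≤ ‖g w‖ * (R - dist w c) ^ s :=
    (isCompact_closedBall c R).exists_isMaxOn ⟨c, mem_closedBall_self hR⟩
      (hg.norm.mul <| ContinuousOn.rpow_const (by fun_prop) fun _ _ ↦ Or.inr hs)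
  have hd : 0 ≤ R - dist w c := sub_nonneg.2 hw
  have hsub : ball w (R - dist w c) ⊆ ball c R := ball_subset_ball' (by simp)
  refine ⟨w, R - dist w c, hd, hsub, ?_, fun v hv ↦ ?_⟩
  · simpa using hmax c (mem_closedBall_self hR)
  have hd_pos : 0 < R - dist w c := by linarith [pos_of_mem_ball hv]
  have hv_dist : (R - dist w c) / 2 ≤ R - dist v c := by
    linarith [dist_triangle v w c, mem_ball.1 hv]
  have hv_mem : v ∈ closedBall c R := mem_closedBall.2 (by linarith)
  have hv_max : ‖g v‖ * ((R - dist w c) / 2) ^ s ≤ ‖g w‖ * (R - dist w c) ^ s :=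
    le_trans (by gcongr) (hmax v hv_mem)
  rw [Real.div_rpow hd zero_le_two, mul_div_assoc', div_le_iff₀ (by positivity)] at hv_max
  refine le_of_mul_le_mul_right (hv_max.trans_eq ?_) (Real.rpow_pos_of_pos hd_pos s)
  ring

variable {E F : Type*} [NormedAddCommGroup E] [NormedSpace ℂ E] [NormedAddCommGroup F]
  [NormedSpace ℂ F]

lemma half_norm_le_norm_of_mem_ball {g : E → F} {w v : E} {r M : ℝ} (hM : 1 ≤ M)
    (hg : DifferentiableOn ℂ g (ball w r)) (hgM : ∀ u ∈ ball w r, ‖g u‖ ≤ M * ‖g w‖)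
    (hv : v ∈ ball w (r / (4 * M))) : ‖g w‖ / 2 ≤ ‖g v‖ := by
  have hr : 0 < r := (div_pos_iff_of_pos_right (by positivity)).1 (pos_of_mem_ball hv)
  have hmaps : MapsTo g (ball w r) (closedBall (g w) (2 * M * ‖g w‖)) := fun u hu ↦ by
    rw [mem_closedBall_iff_norm]
    nlinarith [norm_sub_le (g u) (g w), hgM u hu, norm_nonneg (g w)]
  have hv_dist : dist v w ≤ r / (4 * M) := (mem_ball.1 hv).le
  have hv' : v ∈ ball w r :=
    ball_subset_ball (div_le_self hr.le (by linarith)) hv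
  have hschwarz : dist (g v) (g w) ≤ ‖g w‖ / 2 :=
    calc dist (g v) (g w)
        ≤ 2 * M * ‖g w‖ / r * dist v w :=
          Complex.dist_le_div_mul_dist_of_mapsTo_ball hg hmaps hv'
      _ ≤ 2 * M * ‖g w‖ / r * (r / (4 * M)) := by gcongr
      _ = ‖g w‖ / 2 := by field_simp; ring
  rw [dist_eq_norm, norm_sub_rev] at hschwarz
  linarith [norm_le_norm_add_norm_sub' (g w) (g v)]

variable [FiniteDimensional ℂ E] [MeasurableSpace E] [BorelSpace E] (μ : Measure E)
  [μ.IsAddHaarMeasure]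

lemma enorm_rpow_mul_measure_ball_le_of_norm_le_mul {p : ℝ} (hp : 0 ≤ p) {g : E → F} {w : E}
    {r M : ℝ} (hM : 1 ≤ M) (hg : DifferentiableOn ℂ g (ball w r))
    (hgM : ∀ u ∈ ball w r, ‖g u‖ ≤ M * ‖g w‖) :
    ‖g w‖ₑ ^ p * μ (ball w r) ≤
      ENNReal.ofReal ((4 * M) ^ Module.finrank ℝ E * 2 ^ p) * ∫⁻ v in ball w r, ‖g v‖ₑ ^ p ∂μ := by
  rcases le_or_gt r 0 with hr | hr
  · simp [ball_eq_empty.2 hr]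
  have : FiniteDimensional ℝ E := FiniteDimensional.complexToReal E
  set ρ := r / (4 * M)
  have hρ : ball w ρ ⊆ ball w r := ball_subset_ball (div_le_self hr.le (by linarith))
  have hscale : μ (ball w r) = ENNReal.ofReal ((4 * M) ^ Module.finrank ℝ E) * μ (ball w ρ) := by
    rw [μ.addHaar_ball_center w ρ, ← μ.addHaar_ball_mul_of_pos w (by positivity),
      mul_div_cancel₀ _ (by positivity)]
  have hhalf : ∀ v ∈ ball w ρ, ‖g w‖ₑ ^ p ≤ ENNReal.ofReal (2 ^ p) * ‖g v‖ₑ ^ p := fun v hv ↦ by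
    have hv_half := half_norm_le_norm_of_mem_ball hM hg hgM hv
    simp only [← ofReal_norm, ENNReal.ofReal_rpow_of_nonneg (norm_nonneg _) hp]
    rw [← ENNReal.ofReal_mul (by positivity), ← Real.mul_rpow zero_le_two (norm_nonneg _)]
    gcongr
    linarith
  calc ‖g w‖ₑ ^ p * μ (ball w r)
      = ENNReal.ofReal ((4 * M) ^ Module.finrank ℝ E) * ∫⁻ _ in ball w ρ, ‖g w‖ₑ ^ p ∂μ := by
        rw [hscale, setLIntegral_const, mul_left_comm]
    _ ≤ ENNReal.ofReal ((4 * M) ^ Module.finrank ℝ E) *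
          ∫⁻ v in ball w ρ, ENNReal.ofReal (2 ^ p) * ‖g v‖ₑ ^ p ∂μ := by
        gcongr 1
        exact setLIntegral_mono' measurableSet_ball hhalf
    _ = ENNReal.ofReal ((4 * M) ^ Module.finrank ℝ E * 2 ^ p) *
          ∫⁻ v in ball w ρ, ‖g v‖ₑ ^ p ∂μ := by
        rw [lintegral_const_mul' _ _ ENNReal.ofReal_ne_top, ← mul_assoc,
          ← ENNReal.ofReal_mul (by positivity)]
    _ ≤ _ := by gcongr

theorem exists_enorm_rpow_mul_measure_ball_le (F) [NormedAddCommGroup F] [NormedSpace ℂ F]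
    [Nontrivial E] {p : ℝ} (hp : 0 < p) :
    ∃ K : ℝ, 0 < K ∧ ∀ (g : E → F) (c : E) (R : ℝ), DiffContOnCl ℂ g (ball c R) →
      ‖g c‖ₑ ^ p * μ (ball c R) ≤ ENNReal.ofReal K * ∫⁻ v in ball c R, ‖g v‖ₑ ^ p ∂μ := by
  have : FiniteDimensional ℝ E := FiniteDimensional.complexToReal E
  have : ProperSpace E := FiniteDimensional.proper_real E
  set n := Module.finrank ℝ E
  set M : ℝ := 2 ^ (n / p)
  have hM : 1 ≤ M := Real.one_le_rpow one_le_two (by positivity)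
  refine ⟨2 ^ n * ((4 * M) ^ n * 2 ^ p), by positivity, fun g c R hg ↦ ?_⟩
  rcases le_or_gt R 0 with hR | hR
  · simp [ball_eq_empty.2 hR]
  obtain ⟨w, d, hd, hsub, hmax, hbound⟩ := exists_ball_norm_le_two_rpow_mul hR.le
    (show 0 ≤ n / p by positivity) hg.continuousOn_ball
  have hmax_pow : ‖g c‖ ^ p * R ^ n ≤ ‖g w‖ ^ p * d ^ n := by
    have hrpow : ∀ {x y : ℝ}, 0 ≤ x → 0 ≤ y → (x * y ^ (n / p)) ^ p = x ^ p * y ^ n := by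
      intro x y hx hy
      rw [Real.mul_rpow hx (by positivity), ← Real.rpow_mul hy, div_mul_cancel₀ _ hp.ne',
        Real.rpow_natCast]
    rw [← hrpow (norm_nonneg _) hR.le, ← hrpow (norm_nonneg _) hd]
    gcongr
  have hhalf : ball w (d / 2) ⊆ ball c R := (ball_subset_ball (half_le_self hd)).trans hsub
  have hlocal := enorm_rpow_mul_measure_ball_le_of_norm_le_mul μ hp.le hM
    (hg.differentiableOn.mono hhalf) hbound
  calc ‖g c‖ₑ ^ p * μ (ball c R)
      ≤ ‖g w‖ₑ ^ p * μ (ball w d) := by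
        simp only [μ.addHaar_ball _ hR.le, μ.addHaar_ball _ hd, ← mul_assoc, ← ofReal_norm,
          ENNReal.ofReal_rpow_of_nonneg (norm_nonneg _) hp.le]
        gcongr ?_ * _
        rw [← ENNReal.ofReal_mul (by positivity), ← ENNReal.ofReal_mul (by positivity)]
        exact ENNReal.ofReal_le_ofReal hmax_pow
    _ = ENNReal.ofReal (2 ^ n) * (‖g w‖ₑ ^ p * μ (ball w (d / 2))) := by
        rw [μ.addHaar_ball_center w (d / 2), mul_left_comm, ← μ.addHaar_ball_mul_of_pos w two_pos,
          mul_div_cancel₀ _ two_ne_zero]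
    _ ≤ ENNReal.ofReal (2 ^ n) * (ENNReal.ofReal ((4 * M) ^ n * 2 ^ p) *
          ∫⁻ v in ball c R, ‖g v‖ₑ ^ p ∂μ) := by
        gcongr 1
        exact hlocal.trans (by gcongr)
    _ = _ := by rw [← mul_assoc, ← ENNReal.ofReal_mul (by positivity)]

end SubMeanValue

section AreaMeasure

instance : areaMeasure.IsAddHaarMeasure :=
  Measure.IsAddHaarMeasure.smul volume (by simp [Real.pi_pos]) ENNReal.ofReal_ne_top

lemma areaMeasure_ball (c : ℂ) {r : ℝ} (hr : 0 ≤ r) :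
    areaMeasure (ball c r) = ENNReal.ofReal (r ^ 2) := by
  have hunit : areaMeasure (ball (0 : ℂ) 1) = 1 := by
    have hpi : (NNReal.pi : ℝ≥0∞) = ENNReal.ofReal Real.pi := by
      rw [← NNReal.coe_real_pi, ENNReal.ofReal_coe_nnreal]
    rw [areaMeasure, Measure.smul_apply, Complex.volume_ball, ENNReal.ofReal_one, one_pow, one_mul,
      hpi, smul_eq_mul, ← ENNReal.ofReal_mul (by positivity), inv_mul_cancel₀ Real.pi_ne_zero,
      ENNReal.ofReal_one]
  rw [areaMeasure.addHaar_ball c hr, hunit, Complex.finrank_real_complex, mul_one]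

lemma isOpen_unitDisk : IsOpen unitDisk := isOpen_ball

lemma mem_unitDisk {z : ℂ} : z ∈ unitDisk ↔ ‖z‖ < 1 := mem_ball_zero_iff

lemma one_sub_norm_sq_pos {z : ℂ} (hz : z ∈ unitDisk) : 0 < 1 - ‖z‖ ^ 2 := by
  nlinarith [mem_unitDisk.1 hz, norm_nonneg z]

lemma lintegral_one_sub_norm_sq_rpow_lt_top {α : ℝ} (hα : -1 < α) :
    ∫⁻ z in unitDisk, ENNReal.ofReal ((1 - ‖z‖ ^ 2) ^ α) ∂areaMeasure < ∞ := by
  have hα' : 0 < α + 1 := by linarith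
  have hderiv : ∀ x ∈ Ioo (0 : ℝ) 1, HasDerivAt
      (fun y : ℝ ↦ -((1 - y ^ 2) ^ (α + 1) / (2 * (α + 1)))) (x * (1 - x ^ 2) ^ α) x := by
    intro x hx
    have hx' : 1 - x ^ 2 ≠ 0 := by nlinarith [hx.1, hx.2]
    have hsq : HasDerivAt (fun y : ℝ ↦ 1 - y ^ 2) (-(2 * x)) x := by
      simpa using ((hasDerivAt_id x).pow 2).const_sub 1
    convert! ((hsq.rpow_const (p := α + 1) (Or.inl hx')).div_const (2 * (α + 1))).neg using 1
    rw [add_sub_cancel_right]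
    field_simp
  have hradial : IntegrableOn (fun y : ℝ ↦ y * (1 - y ^ 2) ^ α) (Ioo 0 1) := by
    refine (intervalIntegral.integrableOn_deriv_of_nonneg ?_ hderiv fun x hx ↦ ?_).mono_set
      Ioo_subset_Ioc_self
    · exact ((ContinuousOn.rpow_const (by fun_prop) fun _ _ ↦ Or.inr hα'.le).div_const _).neg
    · have : 0 < 1 - x ^ 2 := by nlinarith [hx.1, hx.2]
      have := hx.1
      positivity
  have hdisk : IntegrableOn (fun z : ℂ ↦ (1 - ‖z‖ ^ 2) ^ α) unitDisk areaMeasure := by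
    refine (integrableOn_fun_norm_addHaar areaMeasure (f := fun y ↦ (1 - y ^ 2) ^ α)).2 ?_
    simpa [Complex.finrank_real_complex] using hradial
  exact hdisk.lintegral_lt_top

end AreaMeasure

section PointwiseBounds

lemma exists_mul_rpow_le_rpow (α : ℝ) : ∃ k : ℝ, 0 < k ∧
    ∀ d t : ℝ, 0 < d → d / 2 ≤ t → t ≤ 3 * d → k * d ^ α ≤ t ^ α := by
  refine ⟨min ((1 / 2) ^ α) (3 ^ α), by positivity, fun d t hd hdt htd ↦ ?_⟩
  rcases le_total 0 α with hα | hα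
  · calc min ((1 / 2) ^ α) (3 ^ α) * d ^ α
        ≤ (1 / 2) ^ α * d ^ α := by gcongr; exact min_le_left _ _
      _ = (d / 2) ^ α := by rw [← Real.mul_rpow (by norm_num) hd.le, one_div_mul_eq_div]
      _ ≤ t ^ α := by gcongr
  · calc min ((1 / 2) ^ α) (3 ^ α) * d ^ α
        ≤ 3 ^ α * d ^ α := by gcongr; exact min_le_right _ _
      _ = (3 * d) ^ α := by rw [Real.mul_rpow (by norm_num) hd.le]
      _ ≤ t ^ α := Real.rpow_le_rpow_of_nonpos (by linarith) htd hα

lemma exists_rpow_one_sub_norm_le_on_ball (α : ℝ) : ∃ k : ℝ, 0 < k ∧ ∀ w ∈ unitDisk,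
    ∀ z ∈ ball w ((1 - ‖w‖) / 2), k * (1 - ‖w‖) ^ α ≤ (1 - ‖z‖ ^ 2) ^ α := by
  obtain ⟨k, hk, hk_le⟩ := exists_mul_rpow_le_rpow α
  refine ⟨k, hk, fun w hw z hz ↦ ?_⟩
  have hw' := mem_unitDisk.1 hw
  have hzw := abs_le.1 ((abs_norm_sub_norm_le z w).trans (mem_ball_iff_norm.1 hz).le)
  apply hk_le <;> nlinarith [norm_nonneg z, norm_nonneg w]

lemma exists_ofReal_rpow_mul_lintegral_ball_le (α : ℝ) : ∃ k : ℝ, 0 < k ∧ ∀ w ∈ unitDisk,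
    ∀ h : ℂ → ℝ≥0∞, ENNReal.ofReal (k * (1 - ‖w‖) ^ α) *
        ∫⁻ z in ball w ((1 - ‖w‖) / 2), h z ∂areaMeasure ≤
      ∫⁻ z in unitDisk, h z * ENNReal.ofReal ((1 - ‖z‖ ^ 2) ^ α) ∂areaMeasure := by
  obtain ⟨k, hk, hweight⟩ := exists_rpow_one_sub_norm_le_on_ball α
  refine ⟨k, hk, fun w hw h ↦ ?_⟩
  have hsub : ball w ((1 - ‖w‖) / 2) ⊆ unitDisk :=
    ball_subset_ball' (by rw [dist_zero_right]; linarith [mem_unitDisk.1 hw])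
  calc ENNReal.ofReal (k * (1 - ‖w‖) ^ α) * ∫⁻ z in ball w ((1 - ‖w‖) / 2), h z ∂areaMeasure
      = ∫⁻ z in ball w ((1 - ‖w‖) / 2), h z * ENNReal.ofReal (k * (1 - ‖w‖) ^ α) ∂areaMeasure := by
        rw [lintegral_mul_const' _ _ ENNReal.ofReal_ne_top, mul_comm]
    _ ≤ ∫⁻ z in ball w ((1 - ‖w‖) / 2), h z * ENNReal.ofReal ((1 - ‖z‖ ^ 2) ^ α) ∂areaMeasure :=
        setLIntegral_mono' measurableSet_ball fun z hz ↦ by gcongr; exact hweight w hw z hz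
    _ ≤ _ := lintegral_mono_set hsub

theorem exists_enorm_rpow_mul_le_lintegral (F) [NormedAddCommGroup F] [NormedSpace ℂ F] {p : ℝ}
    (hp : 0 < p) (α : ℝ) : ∃ K : ℝ, 0 < K ∧ ∀ g : ℂ → F, DifferentiableOn ℂ g unitDisk →
      ∀ w ∈ unitDisk, ‖g w‖ₑ ^ p * ENNReal.ofReal ((1 - ‖w‖) ^ (α + 2)) ≤ ENNReal.ofReal K *
        ∫⁻ z in unitDisk, ‖g z‖ₑ ^ p * ENNReal.ofReal ((1 - ‖z‖ ^ 2) ^ α) ∂areaMeasure := by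
  obtain ⟨K, hK, hmean⟩ := exists_enorm_rpow_mul_measure_ball_le areaMeasure F hp
  obtain ⟨k, hk, hweight⟩ := exists_ofReal_rpow_mul_lintegral_ball_le α
  refine ⟨4 * k⁻¹ * K, by positivity, fun g hg w hw ↦ ?_⟩
  set d := 1 - ‖w‖
  have hd : 0 < d := sub_pos.2 (mem_unitDisk.1 hw)
  have hsub : closedBall w (d / 2) ⊆ unitDisk :=
    closedBall_subset_ball' (by rw [dist_zero_right]; linarith)
  set I := ∫⁻ z in unitDisk, ‖g z‖ₑ ^ p * ENNReal.ofReal ((1 - ‖z‖ ^ 2) ^ α) ∂areaMeasure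
  have hmeanw := hmean g w (d / 2) (hg.diffContOnCl_ball hsub)
  rw [areaMeasure_ball w (by positivity)] at hmeanw
  have hpow : d ^ (α + 2) = 4 * k⁻¹ * (k * d ^ α) * (d / 2) ^ 2 := by
    rw [Real.rpow_add hd, Real.rpow_two]
    field_simp
    ring
  calc ‖g w‖ₑ ^ p * ENNReal.ofReal (d ^ (α + 2))
      = ENNReal.ofReal (4 * k⁻¹) * ENNReal.ofReal (k * d ^ α) *
          (‖g w‖ₑ ^ p * ENNReal.ofReal ((d / 2) ^ 2)) := by
        rw [hpow, ENNReal.ofReal_mul (by positivity), ENNReal.ofReal_mul (by positivity),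
          mul_left_comm]
    _ ≤ ENNReal.ofReal (4 * k⁻¹) * ENNReal.ofReal (k * d ^ α) * (ENNReal.ofReal K *
          ∫⁻ z in ball w (d / 2), ‖g z‖ₑ ^ p ∂areaMeasure) := by gcongr
    _ = ENNReal.ofReal (4 * k⁻¹ * K) * (ENNReal.ofReal (k * d ^ α) *
          ∫⁻ z in ball w (d / 2), ‖g z‖ₑ ^ p ∂areaMeasure) := by
        rw [ENNReal.ofReal_mul (p := 4 * k⁻¹) (by positivity)]
        ring
    _ ≤ ENNReal.ofReal (4 * k⁻¹ * K) * I := by gcongr; exact hweight w hw _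

end PointwiseBounds

section DirichletNorm

variable {p α : ℝ} {f : ℂ → ℂ}

lemma dirichletLintegral_eq_lintegral_enorm (hp : 0 ≤ p) (α : ℝ) (f : ℂ → ℂ) :
    dirichletLintegral p α f =
      ∫⁻ z in unitDisk, ‖deriv f z‖ₑ ^ p * ENNReal.ofReal ((1 - ‖z‖ ^ 2) ^ α) ∂areaMeasure :=
  lintegral_congr fun z ↦ by
    rw [ENNReal.ofReal_mul (by positivity), ← ofReal_norm,
      ENNReal.ofReal_rpow_of_nonneg (norm_nonneg _) hp]

lemma dirichletNorm_nonneg (p α : ℝ) (f : ℂ → ℂ) : 0 ≤ dirichletNorm p α f := by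
  unfold dirichletNorm
  positivity

lemma dirichletNorm_rpow (hp : p ≠ 0) (α : ℝ) (f : ℂ → ℂ) :
    dirichletNorm p α f ^ p = ‖f 0‖ ^ p + (dirichletLintegral p α f).toReal := by
  rw [dirichletNorm, ← Real.rpow_mul (by positivity), one_div_mul_cancel hp, Real.rpow_one]

lemma norm_apply_zero_le_dirichletNorm (hp : 0 < p) (α : ℝ) (f : ℂ → ℂ) :
    ‖f 0‖ ≤ dirichletNorm p α f := by
  rw [← Real.rpow_le_rpow_iff (norm_nonneg _) (dirichletNorm_nonneg p α f) hp,
    dirichletNorm_rpow hp.ne']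
  exact le_add_of_nonneg_right toReal_nonneg

lemma MemDirichlet.dirichletLintegral_le (hp : p ≠ 0) (hf : MemDirichlet p α f) :
    dirichletLintegral p α f ≤ ENNReal.ofReal (dirichletNorm p α f ^ p) := by
  rw [dirichletNorm_rpow hp, ← ENNReal.ofReal_toReal hf.2.ne]
  exact ENNReal.ofReal_le_ofReal (by simpa using Real.rpow_nonneg (norm_nonneg (f 0)) p)

lemma dirichletLintegral_const_mul (p α : ℝ) (c : ℂ) (f : ℂ → ℂ) :
    dirichletLintegral p α (fun z ↦ c * f z) =
      ENNReal.ofReal (‖c‖ ^ p) * dirichletLintegral p α f := by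
  unfold dirichletLintegral
  rw [← lintegral_const_mul' _ _ ENNReal.ofReal_ne_top]
  refine lintegral_congr fun z ↦ ?_
  rw [deriv_const_mul_field, norm_mul, Real.mul_rpow (norm_nonneg _) (norm_nonneg _), mul_assoc,
    ENNReal.ofReal_mul (by positivity)]

lemma MemDirichlet.const_mul (c : ℂ) (hf : MemDirichlet p α f) :
    MemDirichlet p α (fun z ↦ c * f z) :=
  ⟨hf.1.const_mul c, by
    rw [dirichletLintegral_const_mul]
    exact ENNReal.mul_lt_top ENNReal.ofReal_lt_top hf.2⟩

lemma dirichletNorm_const_mul (hp : 0 < p) (α : ℝ) (c : ℂ) (f : ℂ → ℂ) :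
    dirichletNorm p α (fun z ↦ c * f z) = ‖c‖ * dirichletNorm p α f := by
  rw [← Real.rpow_left_inj (dirichletNorm_nonneg p α _)
      (mul_nonneg (norm_nonneg c) (dirichletNorm_nonneg p α f)) hp.ne',
    Real.mul_rpow (norm_nonneg c) (dirichletNorm_nonneg p α f), dirichletNorm_rpow hp.ne',
    dirichletNorm_rpow hp.ne', dirichletLintegral_const_mul, norm_mul,
    Real.mul_rpow (norm_nonneg _) (norm_nonneg _), toReal_mul, toReal_ofReal (by positivity),
    mul_add]

end DirichletNorm

section UpperBound

lemma norm_le_of_norm_fderiv_le_rpow_one_sub_norm {E F : Type*} [NormedAddCommGroup E]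
    [NormedSpace ℝ E] [NormedAddCommGroup F] [NormedSpace ℝ F] {f : E → F} {f' : E → E →L[ℝ] F}
    {N s : ℝ} (hs : s ≠ 0) (hf : ∀ x ∈ ball (0 : E) 1, HasFDerivAt f (f' x) x)
    (hf' : ∀ x ∈ ball (0 : E) 1, ‖f' x‖ ≤ N * (1 - ‖x‖) ^ (-s - 1)) {x : E}
    (hx : x ∈ ball (0 : E) 1) :
    ‖f x‖ ≤ ‖f 0‖ + N / s * ((1 - ‖x‖) ^ (-s) - 1) := by
  have hx' : ‖x‖ < 1 := mem_ball_zero_iff.1 hx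
  have hnorm : ∀ t ∈ Icc (0 : ℝ) 1, ‖t • x‖ = t * ‖x‖ := fun t ht ↦ norm_smul_of_nonneg ht.1 x
  have hlt : ∀ t ∈ Icc (0 : ℝ) 1, t * ‖x‖ < 1 := fun t ht ↦ by
    nlinarith [ht.1, ht.2, norm_nonneg x]
  have hmem : ∀ t ∈ Icc (0 : ℝ) 1, t • x ∈ ball (0 : E) 1 := fun t ht ↦
    mem_ball_zero_iff.2 ((hnorm t ht).trans_lt (hlt t ht))
  have hderiv : ∀ t ∈ Icc (0 : ℝ) 1,
      HasDerivAt (fun t : ℝ ↦ f (t • x)) (f' (t • x) x) t := fun t ht ↦ by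
    simpa [Function.comp_def] using
      (hf _ (hmem t ht)).comp_hasDerivAt t ((hasDerivAt_id t).smul_const x)
  have hbound : ∀ t ∈ Icc (0 : ℝ) 1,
      HasDerivAt (fun t : ℝ ↦ ‖f 0‖ + N / s * ((1 - t * ‖x‖) ^ (-s) - 1))
        (N * (1 - t * ‖x‖) ^ (-s - 1) * ‖x‖) t := fun t ht ↦ by
    have hlin : HasDerivAt (fun t : ℝ ↦ 1 - t * ‖x‖) (-‖x‖) t := by
      simpa using ((hasDerivAt_id t).mul_const ‖x‖).const_sub 1
    convert! (((hlin.rpow_const (p := -s) (Or.inl (sub_pos.2 (hlt t ht)).ne')).sub_const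
      1).const_mul (N / s)).const_add ‖f 0‖ using 1
    field_simp
  have hle := image_norm_le_of_norm_deriv_right_le_deriv_boundary'
    (fun t ht ↦ (hderiv t ht).continuousAt.continuousWithinAt)
    (fun t ht ↦ (hderiv t (Ico_subset_Icc_self ht)).hasDerivWithinAt) (by simp)
    (fun t ht ↦ (hbound t ht).continuousAt.continuousWithinAt)
    (fun t ht ↦ (hbound t (Ico_subset_Icc_self ht)).hasDerivWithinAt)
    (fun t ht ↦ by
      have ht' := Ico_subset_Icc_self ht
      rw [← hnorm t ht']
      exact (f' (t • x)).le_of_opNorm_le (hf' _ (hmem t ht')) x)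
    (right_mem_Icc.2 zero_le_one)
  simpa using hle

variable {p : ℝ}

lemma exists_norm_deriv_le_dirichletNorm_mul (hp : 0 < p) (α : ℝ) :
    ∃ N : ℝ, 0 < N ∧ ∀ f : ℂ → ℂ, MemDirichlet p α f → ∀ w ∈ unitDisk,
      ‖deriv f w‖ ≤ N * dirichletNorm p α f * (1 - ‖w‖) ^ (-((α + 2) / p)) := by
  obtain ⟨K, hK, hpoint⟩ := exists_enorm_rpow_mul_le_lintegral ℂ hp α
  refine ⟨K ^ (1 / p), by positivity, fun f hf w hw ↦ ?_⟩
  have hd : 0 < 1 - ‖w‖ := sub_pos.2 (mem_unitDisk.1 hw)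
  have hnorm := dirichletNorm_nonneg p α f
  have hle : ‖deriv f w‖ₑ ^ p * ENNReal.ofReal ((1 - ‖w‖) ^ (α + 2)) ≤
      ENNReal.ofReal K * ENNReal.ofReal (dirichletNorm p α f ^ p) :=
    (hpoint _ (hf.1.deriv isOpen_unitDisk) w hw).trans <| by
      rw [← dirichletLintegral_eq_lintegral_enorm hp.le]
      gcongr
      exact hf.dirichletLintegral_le hp.ne'
  rw [← ofReal_norm, ENNReal.ofReal_rpow_of_nonneg (norm_nonneg _) hp.le,
    ← ENNReal.ofReal_mul (by positivity), ← ENNReal.ofReal_mul hK.le,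
    ENNReal.ofReal_le_ofReal_iff (by positivity)] at hle
  rw [← Real.rpow_le_rpow_iff (norm_nonneg _) (by positivity) hp,
    Real.mul_rpow (by positivity) (by positivity), Real.mul_rpow (by positivity) hnorm,
    ← Real.rpow_mul hK.le, ← Real.rpow_mul hd.le, one_div_mul_cancel hp.ne', Real.rpow_one,
    neg_mul, div_mul_cancel₀ _ hp.ne', Real.rpow_neg hd.le, ← div_eq_mul_inv,
    le_div_iff₀ (by positivity)]
  exact hle

lemma one_sub_norm_rpow_neg_le {s : ℝ} (hs : 0 ≤ s) {z : ℂ} (hz : z ∈ unitDisk) :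
    (1 - ‖z‖) ^ (-s) ≤ 2 ^ s / (1 - ‖z‖ ^ 2) ^ s := by
  have hz' : 0 < 1 - ‖z‖ := sub_pos.2 (mem_unitDisk.1 hz)
  have hsq := one_sub_norm_sq_pos hz
  rw [Real.rpow_neg hz'.le, ← Real.inv_rpow hz'.le, ← Real.div_rpow zero_le_two hsq.le]
  gcongr
  rw [inv_le_comm₀ hz' (by positivity), inv_div]
  nlinarith [norm_nonneg z]

theorem exists_norm_le_mul_dirichletNorm_div {α : ℝ} (hp : 0 < p) (hpα : p < α + 2) :
    ∃ C : ℝ, 0 < C ∧ ∀ f : ℂ → ℂ, MemDirichlet p α f → ∀ z ∈ unitDisk,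
      ‖f z‖ ≤ C * dirichletNorm p α f / (1 - ‖z‖ ^ 2) ^ ((α + 2 - p) / p) := by
  obtain ⟨N, hN, hderiv⟩ := exists_norm_deriv_le_dirichletNorm_mul hp α
  set s := (α + 2 - p) / p with hs_def
  have hs : 0 < s := div_pos (by linarith) hp
  have hexp : -((α + 2) / p) = -s - 1 := by rw [hs_def]; field_simp; ring
  refine ⟨1 + N / s * 2 ^ s, by positivity, fun f hf z hz ↦ ?_⟩
  have hnorm := dirichletNorm_nonneg p α f
  have hsq := one_sub_norm_sq_pos hz
  have hradial : ‖f z‖ ≤ ‖f 0‖ + N * dirichletNorm p α f / s * ((1 - ‖z‖) ^ (-s) - 1) :=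
    norm_le_of_norm_fderiv_le_rpow_one_sub_norm hs.ne'
      (fun w hw ↦ (hf.1.differentiableAt
        (isOpen_unitDisk.mem_nhds hw)).hasDerivAt.hasFDerivAt.restrictScalars ℝ)
      (fun w hw ↦ by simpa [← hexp] using hderiv f hf w hw) hz
  have hone : 1 ≤ 1 / (1 - ‖z‖ ^ 2) ^ s :=
    one_le_one_div (by positivity) (Real.rpow_le_one hsq.le (by simp) hs.le)
  calc ‖f z‖
      ≤ ‖f 0‖ + N * dirichletNorm p α f / s * ((1 - ‖z‖) ^ (-s) - 1) := hradial
    _ ≤ dirichletNorm p α f * (1 / (1 - ‖z‖ ^ 2) ^ s) +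
          N * dirichletNorm p α f / s * (2 ^ s / (1 - ‖z‖ ^ 2) ^ s) := by
        gcongr ?_ + _ * ?_
        · exact (norm_apply_zero_le_dirichletNorm hp α f).trans (le_mul_of_one_le_right hnorm hone)
        · exact (sub_le_self _ zero_le_one).trans (one_sub_norm_rpow_neg_le hs.le hz)
    _ = (1 + N / s * 2 ^ s) * dirichletNorm p α f / (1 - ‖z‖ ^ 2) ^ s := by ring

end UpperBound

open scoped ComplexConjugate

section DiskMobius

/-- The disk automorphism `φ_a(w) = (w - a) / (1 - ā w)`, which maps `a` to `0`. It is defined on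
all of `ℂ`, with a junk value at the pole `1 / ā`, and is only used on the unit disk. -/
def diskMobius (a w : ℂ) : ℂ := (w - a) / (1 - conj a * w)

variable {a w : ℂ}

lemma re_one_sub_conj_mul_pos (ha : a ∈ unitDisk) (hw : w ∈ unitDisk) :
    0 < (1 - conj a * w).re := by
  have hle : (conj a * w).re ≤ ‖a‖ * ‖w‖ := by
    simpa using Complex.re_le_norm (conj a * w)
  rw [Complex.sub_re, Complex.one_re]
  nlinarith [mem_unitDisk.1 ha, mem_unitDisk.1 hw, norm_nonneg a, norm_nonneg w]

lemma one_sub_conj_mul_ne_zero (ha : a ∈ unitDisk) (hw : w ∈ unitDisk) :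
    1 - conj a * w ≠ 0 :=
  fun h ↦ (re_one_sub_conj_mul_pos ha hw).ne' (by simp [h])

lemma one_sub_conj_mul_self (a : ℂ) : 1 - conj a * a = ((1 - ‖a‖ ^ 2 : ℝ) : ℂ) := by
  rw [Complex.conj_mul']
  norm_cast

lemma hasDerivAt_one_sub_conj_mul (a w : ℂ) :
    HasDerivAt (fun z ↦ 1 - conj a * z) (-conj a) w := by
  simpa using ((hasDerivAt_id w).const_mul (conj a)).const_sub 1

lemma hasDerivAt_diskMobius (h : 1 - conj a * w ≠ 0) :
    HasDerivAt (diskMobius a) (((1 - ‖a‖ ^ 2 : ℝ) : ℂ) / (1 - conj a * w) ^ 2) w := by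
  convert! ((hasDerivAt_id w).sub_const a).div (hasDerivAt_one_sub_conj_mul a w) h using 2
  rw [← one_sub_conj_mul_self, id]
  ring

lemma norm_deriv_diskMobius (ha : a ∈ unitDisk) (hw : w ∈ unitDisk) :
    ‖deriv (diskMobius a) w‖ = (1 - ‖a‖ ^ 2) / ‖1 - conj a * w‖ ^ 2 := by
  rw [(hasDerivAt_diskMobius (one_sub_conj_mul_ne_zero ha hw)).deriv, norm_div, norm_pow,
    Complex.norm_of_nonneg (one_sub_norm_sq_pos ha).le]

lemma norm_deriv_diskMobius_pos (ha : a ∈ unitDisk) (hw : w ∈ unitDisk) :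
    0 < ‖deriv (diskMobius a) w‖ := by
  have := one_sub_norm_sq_pos ha
  have := norm_pos_iff.2 (one_sub_conj_mul_ne_zero ha hw)
  rw [norm_deriv_diskMobius ha hw]
  positivity

lemma norm_one_sub_conj_mul_sq_sub_norm_sub_sq (a w : ℂ) :
    ‖1 - conj a * w‖ ^ 2 - ‖w - a‖ ^ 2 = (1 - ‖a‖ ^ 2) * (1 - ‖w‖ ^ 2) := by
  simp only [← Complex.normSq_eq_norm_sq, Complex.normSq_apply, Complex.sub_re, Complex.sub_im,
    Complex.mul_re, Complex.mul_im, Complex.conj_re, Complex.conj_im, Complex.one_re,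
    Complex.one_im]
  ring

lemma one_sub_norm_diskMobius_sq (ha : a ∈ unitDisk) (hw : w ∈ unitDisk) :
    1 - ‖diskMobius a w‖ ^ 2 = ‖deriv (diskMobius a) w‖ * (1 - ‖w‖ ^ 2) := by
  have hne : ‖1 - conj a * w‖ ≠ 0 := norm_ne_zero_iff.2 (one_sub_conj_mul_ne_zero ha hw)
  rw [norm_deriv_diskMobius ha hw, div_mul_eq_mul_div, ← norm_one_sub_conj_mul_sq_sub_norm_sub_sq,
    sub_div, div_self (pow_ne_zero 2 hne), diskMobius, norm_div, div_pow]

lemma mapsTo_diskMobius (ha : a ∈ unitDisk) : MapsTo (diskMobius a) unitDisk unitDisk := by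
  intro w hw
  have hpos : 0 < 1 - ‖diskMobius a w‖ ^ 2 := by
    rw [one_sub_norm_diskMobius_sq ha hw]
    exact mul_pos (norm_deriv_diskMobius_pos ha hw) (one_sub_norm_sq_pos hw)
  exact mem_unitDisk.2 ((sq_lt_one_iff₀ (norm_nonneg _)).1 (sub_pos.1 hpos))

lemma injOn_diskMobius (ha : a ∈ unitDisk) : InjOn (diskMobius a) unitDisk := by
  intro w hw v hv h
  rw [diskMobius, diskMobius, div_eq_div_iff (one_sub_conj_mul_ne_zero ha hw)
    (one_sub_conj_mul_ne_zero ha hv)] at h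
  have hprod : (w - v) * (1 - conj a * a) = 0 := by linear_combination h
  exact sub_eq_zero.1 ((mul_eq_zero.1 hprod).resolve_right (one_sub_conj_mul_ne_zero ha ha))

theorem lintegral_image_eq_lintegral_enorm_deriv_sq_mul (μ : Measure ℂ) [μ.IsAddHaarMeasure]
    {s : Set ℂ} (hs : MeasurableSet s) {f f' : ℂ → ℂ} (hf : ∀ z ∈ s, HasDerivWithinAt f (f' z) s z)
    (hinj : InjOn f s) (g : ℂ → ℝ≥0∞) :
    ∫⁻ z in f '' s, g z ∂μ = ∫⁻ z in s, ‖f' z‖ₑ ^ 2 * g (f z) ∂μ := by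
  rw [lintegral_image_eq_lintegral_abs_det_fderiv_mul μ hs
    (fun z hz ↦ (hf z hz).hasFDerivWithinAt.restrictScalars ℝ) hinj]
  refine lintegral_congr fun z ↦ ?_
  congr 1
  simp [ContinuousLinearMap.det, LinearMap.det_restrictScalars, Algebra.norm_complex_eq,
    Complex.normSq_eq_norm_sq, ENNReal.ofReal_pow]

lemma lintegral_enorm_deriv_diskMobius_sq_mul_le (α : ℝ) (ha : a ∈ unitDisk) :
    ∫⁻ w in unitDisk, ‖deriv (diskMobius a) w‖ₑ ^ 2 *
        ENNReal.ofReal ((1 - ‖diskMobius a w‖ ^ 2) ^ α) ∂areaMeasure ≤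
      ∫⁻ z in unitDisk, ENNReal.ofReal ((1 - ‖z‖ ^ 2) ^ α) ∂areaMeasure := by
  rw [← lintegral_image_eq_lintegral_enorm_deriv_sq_mul areaMeasure isOpen_unitDisk.measurableSet
    (fun w hw ↦ (hasDerivAt_diskMobius
      (one_sub_conj_mul_ne_zero ha hw)).differentiableAt.hasDerivAt.hasDerivWithinAt)
    (injOn_diskMobius ha) (fun z ↦ ENNReal.ofReal ((1 - ‖z‖ ^ 2) ^ α))]
  exact lintegral_mono_set (mapsTo_diskMobius ha).image_subset

end DiskMobius

section LowerBound

variable {p α : ℝ} {a w : ℂ}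

/-- The test function `(1 - |a|²)^β (1 - ā w)^(1 - 2β)`. The exponents are chosen so that the
modulus of its derivative is a constant times `|a| |φ_a'|^β`, with `φ_a = diskMobius a`. -/
def normalizedKernel (β : ℝ) (a w : ℂ) : ℂ :=
  ((1 - ‖a‖ ^ 2) ^ β : ℝ) * (1 - conj a * w) ^ ((1 - 2 * β : ℝ) : ℂ)

lemma hasDerivAt_normalizedKernel (β : ℝ) (ha : a ∈ unitDisk) (hw : w ∈ unitDisk) :
    HasDerivAt (normalizedKernel β a) (((1 - ‖a‖ ^ 2) ^ β : ℝ) * (((1 - 2 * β : ℝ) : ℂ) *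
      (1 - conj a * w) ^ ((-(2 * β) : ℝ) : ℂ) * -conj a)) w := by
  have hexp : ((-(2 * β) : ℝ) : ℂ) = ((1 - 2 * β : ℝ) : ℂ) - 1 := by push_cast; ring
  rw [hexp]
  exact ((hasDerivAt_one_sub_conj_mul a w).cpow_const
    (Or.inl (re_one_sub_conj_mul_pos ha hw))).const_mul _

lemma norm_deriv_normalizedKernel (β : ℝ) (ha : a ∈ unitDisk) (hw : w ∈ unitDisk) :
    ‖deriv (normalizedKernel β a) w‖ =
      |1 - 2 * β| * ‖a‖ * ‖deriv (diskMobius a) w‖ ^ β := by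
  have hδ := one_sub_norm_sq_pos ha
  rw [(hasDerivAt_normalizedKernel β ha hw).deriv, norm_deriv_diskMobius ha hw, norm_mul, norm_mul,
    norm_mul, Complex.norm_cpow_real, norm_neg, Complex.norm_conj, Complex.norm_real,
    Complex.norm_real, Real.norm_of_nonneg (by positivity), Real.norm_eq_abs,
    Real.div_rpow hδ.le (by positivity), Real.rpow_neg (norm_nonneg _),
    Real.rpow_mul (norm_nonneg _), Real.rpow_two]
  ring

lemma norm_normalizedKernel_self (β : ℝ) (ha : a ∈ unitDisk) :
    ‖normalizedKernel β a a‖ = (1 - ‖a‖ ^ 2) ^ (1 - β) := by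
  have hδ := one_sub_norm_sq_pos ha
  rw [normalizedKernel, one_sub_conj_mul_self, norm_mul, Complex.norm_cpow_real,
    Complex.norm_of_nonneg hδ.le, Complex.norm_of_nonneg (by positivity), ← Real.rpow_add hδ]
  ring_nf

lemma norm_normalizedKernel_zero_le_one {β : ℝ} (hβ : 0 ≤ β) (ha : a ∈ unitDisk) :
    ‖normalizedKernel β a 0‖ ≤ 1 := by
  have hδ := one_sub_norm_sq_pos ha
  simpa [normalizedKernel, abs_of_nonneg (Real.rpow_nonneg hδ.le β)] using
    Real.rpow_le_one hδ.le (by simp) hβ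

lemma norm_deriv_normalizedKernel_rpow_mul_le (hp : 0 < p) (α : ℝ) (ha : a ∈ unitDisk)
    (hw : w ∈ unitDisk) :
    ‖deriv (normalizedKernel ((α + 2) / p) a) w‖ ^ p * (1 - ‖w‖ ^ 2) ^ α ≤
      |1 - 2 * ((α + 2) / p)| ^ p *
        (‖deriv (diskMobius a) w‖ ^ 2 * (1 - ‖diskMobius a w‖ ^ 2) ^ α) := by
  have hw' := one_sub_norm_sq_pos hw
  have hderiv_pos := norm_deriv_diskMobius_pos ha hw
  set D := ‖deriv (diskMobius a) w‖
  calc ‖deriv (normalizedKernel ((α + 2) / p) a) w‖ ^ p * (1 - ‖w‖ ^ 2) ^ α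
      ≤ (|1 - 2 * ((α + 2) / p)| * D ^ ((α + 2) / p)) ^ p * (1 - ‖w‖ ^ 2) ^ α := by
        rw [norm_deriv_normalizedKernel _ ha hw]
        gcongr
        exact mul_le_of_le_one_right (abs_nonneg _) (mem_unitDisk.1 ha).le
    _ = |1 - 2 * ((α + 2) / p)| ^ p * (D ^ 2 * (D * (1 - ‖w‖ ^ 2)) ^ α) := by
        rw [Real.mul_rpow (abs_nonneg _) (by positivity), ← Real.rpow_mul hderiv_pos.le,
          div_mul_cancel₀ _ hp.ne', Real.rpow_add hderiv_pos, Real.rpow_two,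
          Real.mul_rpow hderiv_pos.le hw'.le]
        ring
    _ = _ := by rw [one_sub_norm_diskMobius_sq ha hw]

lemma dirichletLintegral_normalizedKernel_le (hp : 0 < p) (α : ℝ) (ha : a ∈ unitDisk) :
    dirichletLintegral p α (normalizedKernel ((α + 2) / p) a) ≤
      ENNReal.ofReal (|1 - 2 * ((α + 2) / p)| ^ p) *
        ∫⁻ z in unitDisk, ENNReal.ofReal ((1 - ‖z‖ ^ 2) ^ α) ∂areaMeasure := by
  refine le_trans ?_ (mul_le_mul_right (lintegral_enorm_deriv_diskMobius_sq_mul_le α ha) _)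
  rw [← lintegral_const_mul' _ _ ENNReal.ofReal_ne_top]
  refine setLIntegral_mono' isOpen_unitDisk.measurableSet fun w hw ↦ ?_
  rw [← ofReal_norm, ← ENNReal.ofReal_pow (norm_nonneg _), ← ENNReal.ofReal_mul (by positivity),
    ← ENNReal.ofReal_mul (by positivity)]
  exact ENNReal.ofReal_le_ofReal (norm_deriv_normalizedKernel_rpow_mul_le hp α ha hw)

lemma exists_dirichletNorm_normalizedKernel_le (hp : 0 < p) (hα : -1 < α) :
    ∃ T : ℝ, 0 < T ∧ ∀ a ∈ unitDisk, MemDirichlet p α (normalizedKernel ((α + 2) / p) a) ∧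
      dirichletNorm p α (normalizedKernel ((α + 2) / p) a) ≤ T := by
  have hfin : ENNReal.ofReal (|1 - 2 * ((α + 2) / p)| ^ p) *
      ∫⁻ z in unitDisk, ENNReal.ofReal ((1 - ‖z‖ ^ 2) ^ α) ∂areaMeasure < ∞ :=
    ENNReal.mul_lt_top ENNReal.ofReal_lt_top (lintegral_one_sub_norm_sq_rpow_lt_top hα)
  have hβ : 0 ≤ (α + 2) / p := div_nonneg (by linarith) hp.le
  refine ⟨(1 + (ENNReal.ofReal (|1 - 2 * ((α + 2) / p)| ^ p) *
      ∫⁻ z in unitDisk, ENNReal.ofReal ((1 - ‖z‖ ^ 2) ^ α) ∂areaMeasure).toReal) ^ (1 / p),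
    by positivity, fun a ha ↦ ⟨⟨fun w hw ↦ ?_, ?_⟩, ?_⟩⟩
  · exact (hasDerivAt_normalizedKernel _ ha hw).differentiableAt.differentiableWithinAt
  · exact (dirichletLintegral_normalizedKernel_le hp α ha).trans_lt hfin
  · unfold dirichletNorm
    gcongr
    · exact Real.rpow_le_one (norm_nonneg _) (norm_normalizedKernel_zero_le_one hβ ha) hp.le
    · exact hfin.ne
    · exact dirichletLintegral_normalizedKernel_le hp α ha

theorem exists_memDirichlet_le_norm_apply (hp : 0 < p) (hα : -1 < α) :
    ∃ c : ℝ, 0 < c ∧ ∀ a ∈ unitDisk, ∃ f : ℂ → ℂ, MemDirichlet p α f ∧ dirichletNorm p α f ≤ 1 ∧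
      c / (1 - ‖a‖ ^ 2) ^ ((α + 2 - p) / p) = ‖f a‖ := by
  obtain ⟨T, hT, hkernel⟩ := exists_dirichletNorm_normalizedKernel_le hp hα
  refine ⟨T⁻¹, by positivity, fun a ha ↦ ?_⟩
  have hnormT : ‖((T⁻¹ : ℝ) : ℂ)‖ = T⁻¹ := Complex.norm_of_nonneg (by positivity)
  obtain ⟨hmem, hle⟩ := hkernel a ha
  refine ⟨fun w ↦ ((T⁻¹ : ℝ) : ℂ) * normalizedKernel ((α + 2) / p) a w, hmem.const_mul _, ?_, ?_⟩
  · rw [dirichletNorm_const_mul hp, hnormT]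
    exact inv_mul_le_one_of_le₀ hle hT.le
  · have hexp : 1 - (α + 2) / p = -((α + 2 - p) / p) := by field_simp; ring
    rw [norm_mul, hnormT, norm_normalizedKernel_self _ ha, hexp,
      Real.rpow_neg (one_sub_norm_sq_pos ha).le, div_eq_mul_inv]

end LowerBound

/-- Lemma 2.1(1): for `p < α + 2`, the point evaluation functional on `D^p_α` satisfies
`‖δ_z‖ ≍ (1-|z|²)^{-(α+2-p)/p}`. -/
theorem pointEval_dirichlet_subcritical (p α : ℝ) (hα : -1 < α) (hp : 0 < p)
    (hpα : p < α + 2) :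
    ∃ c C : ℝ, 0 < c ∧ 0 < C ∧ ∀ z ∈ unitDisk,
      c / (1 - ‖z‖ ^ 2) ^ ((α + 2 - p) / p) ≤
        sSup {r : ℝ | ∃ f : ℂ → ℂ, MemDirichlet p α f ∧ dirichletNorm p α f ≤ 1 ∧ r = ‖f z‖} ∧
      sSup {r : ℝ | ∃ f : ℂ → ℂ, MemDirichlet p α f ∧ dirichletNorm p α f ≤ 1 ∧ r = ‖f z‖} ≤
        C / (1 - ‖z‖ ^ 2) ^ ((α + 2 - p) / p) := by
  obtain ⟨C, hC, hupper⟩ := exists_norm_le_mul_dirichletNorm_div hp hpα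
  obtain ⟨c, hc, hlower⟩ := exists_memDirichlet_le_norm_apply hp hα
  refine ⟨c, C, hc, hC, fun z hz ↦ ?_⟩
  have hz' := one_sub_norm_sq_pos hz
  have hbound : C / (1 - ‖z‖ ^ 2) ^ ((α + 2 - p) / p) ∈ upperBounds
      {r : ℝ | ∃ f : ℂ → ℂ, MemDirichlet p α f ∧ dirichletNorm p α f ≤ 1 ∧ r = ‖f z‖} := by
    rintro _ ⟨f, hf, hnorm, rfl⟩
    refine (hupper f hf z hz).trans ?_
    gcongr
    exact mul_le_of_le_one_right hC.le hnorm
  exact ⟨le_csSup ⟨_, hbound⟩ (hlower z hz), Real.sSup_le hbound (by positivity)⟩
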